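/- Let A = !![8, 3; -3, -1] be the 2×2 integer matrix with rows (8, 3) and (−3, −1). For every natural number k ≥ 1, the quotient additive group (Fin 2 → ℤ) ⧸ range(toLin'(A^k − 1)) is finite, and its cardinality equals the natural absolute value |det(A^k − 1)|. Consequently, for positive natural numbers k < l, the quotients (Fin 2 → ℤ) ⧸ range(toLin'(A^k − 1)) and (Fin 2 → ℤ) ⧸ range(toLin'(A^l − 1)) are not isomorphic as additive groups. -/

import Mathlib

/-!
Let `A` be an integral `2 × 2` matrix of determinant `1` and trace greater than `2`. The quotient
of `ℤ²` by the image of `A ^ k - 1` has order `|det (A ^ k - 1)|` as soon as this determinant is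
nonzero, and here `det (A ^ k - 1) = 2 - trace (A ^ k)`. By Cayley–Hamilton the traces satisfy
`trace (A ^ (k + 2)) = trace A * trace (A ^ (k + 1)) - trace (A ^ k)`, so they increase strictly
from their value `2` at `k = 0`: the orders of the quotients are positive for `k ≥ 1` and pairwise
distinct.
-/

section QuotientRange

variable {M : Type*} [AddCommGroup M] [Module.Free ℤ M] [Module.Finite ℤ M]

theorem finite_quotient_range_iff_det_ne_zero (f : M →ₗ[ℤ] M) :
    Finite (M ⧸ LinearMap.range f) ↔ LinearMap.det f ≠ 0 := by
  have rank_nullity := Submodule.finrank_quotient_add_finrank (LinearMap.ker f)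
  rw [f.quotKerEquivRange.finrank_eq] at rank_nullity
  calc Finite (M ⧸ LinearMap.range f)
      ↔ Module.finrank ℤ (LinearMap.range f) = Module.finrank ℤ M := Submodule.finiteQuotient_iff _
    _ ↔ Module.finrank ℤ (LinearMap.ker f) = 0 := by lia
    _ ↔ LinearMap.ker f = ⊥ := Submodule.finrank_eq_zero
    _ ↔ LinearMap.det f ≠ 0 := by rw [ne_eq, LinearMap.det_eq_zero_iff_ker_ne_bot, not_ne_iff]

theorem card_quotient_range_eq_natAbs_det (f : M →ₗ[ℤ] M) :
    Nat.card (M ⧸ LinearMap.range f) = (LinearMap.det f).natAbs := by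
  by_cases hdet : LinearMap.det f = 0
  · have : Infinite (M ⧸ LinearMap.range f) := by
      rwa [← not_finite_iff_infinite, finite_quotient_range_iff_det_ne_zero, not_not]
    rw [hdet, Int.natAbs_zero, Nat.card_eq_zero_of_infinite]
  · have injective : Function.Injective f := by
      rwa [← LinearMap.ker_eq_bot, ← not_ne_iff, ← LinearMap.det_eq_zero_iff_ker_ne_bot]
    exact (Submodule.natAbs_det_equiv _ (LinearEquiv.ofInjective f injective)).symm

end QuotientRange

section CommRing

variable {R : Type*} [CommRing R]

theorem det_sub_one_fin_two (A : Matrix (Fin 2) (Fin 2) R) :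
    (A - 1).det = A.det - A.trace + 1 := by
  simp only [Matrix.det_fin_two, Matrix.trace_fin_two, Matrix.sub_apply, Matrix.one_apply_eq,
    Matrix.one_apply_ne, ne_eq, zero_ne_one, one_ne_zero, not_false_eq_true]
  ring

theorem det_pow_sub_one_fin_two {A : Matrix (Fin 2) (Fin 2) R} (hdet : A.det = 1) (k : ℕ) :
    (A ^ k - 1).det = 2 - (A ^ k).trace := by
  rw [det_sub_one_fin_two, Matrix.det_pow, hdet, one_pow]
  ring

theorem sq_eq_trace_smul_sub_det_smul_one (A : Matrix (Fin 2) (Fin 2) R) :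
    A ^ 2 = A.trace • A - A.det • 1 := by
  nontriviality R
  have cayley_hamilton := A.aeval_self_charpoly
  simp only [Matrix.charpoly_fin_two, map_add, map_sub, map_mul, map_pow, Polynomial.aeval_X,
    Polynomial.aeval_C, Algebra.algebraMap_eq_smul_one, smul_one_mul] at cayley_hamilton
  rwa [sub_add, sub_eq_zero] at cayley_hamilton

theorem trace_pow_add_two (A : Matrix (Fin 2) (Fin 2) R) (k : ℕ) :
    (A ^ (k + 2)).trace = A.trace * (A ^ (k + 1)).trace - A.det * (A ^ k).trace := by
  rw [pow_add, sq_eq_trace_smul_sub_det_smul_one, mul_sub, mul_smul_comm, mul_smul_comm, mul_one,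
    ← pow_succ, Matrix.trace_sub, Matrix.trace_smul, Matrix.trace_smul, smul_eq_mul, smul_eq_mul]

end CommRing

theorem strictMono_trace_pow {R : Type*} [CommRing R] [LinearOrder R] [IsStrictOrderedRing R]
    {A : Matrix (Fin 2) (Fin 2) R} (hdet : A.det = 1) (htrace : 2 < A.trace) :
    StrictMono fun k : ℕ ↦ (A ^ k).trace := by
  have pos_and_lt (k : ℕ) : 0 < (A ^ k).trace ∧ (A ^ k).trace < (A ^ (k + 1)).trace := by
    induction k with
    | zero => simpa using htrace
    | succ k ih =>
      obtain ⟨pos, lt⟩ := ih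
      have pos_succ : 0 < (A ^ (k + 1)).trace := pos.trans lt
      refine ⟨pos_succ, sub_pos.mp ?_⟩
      calc 0 < (A.trace - 2) * (A ^ (k + 1)).trace + ((A ^ (k + 1)).trace - (A ^ k).trace) :=
            add_pos (mul_pos (sub_pos.mpr htrace) pos_succ) (sub_pos.mpr lt)
        _ = (A ^ (k + 1 + 1)).trace - (A ^ (k + 1)).trace := by
            rw [trace_pow_add_two, hdet]
            ring
  exact strictMono_nat_of_lt_succ fun k ↦ (pos_and_lt k).2

theorem strictMono_natAbs_det_pow_sub_one {A : Matrix (Fin 2) (Fin 2) ℤ} (hdet : A.det = 1)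
    (htrace : 2 < A.trace) : StrictMono fun k : ℕ ↦ (A ^ k - 1).det.natAbs := by
  intro k l hkl
  have trace_mono := strictMono_trace_pow hdet htrace
  have two_le : 2 ≤ (A ^ k).trace := by simpa using trace_mono.monotone k.zero_le
  have lt : (A ^ k).trace < (A ^ l).trace := trace_mono hkl
  simp only [det_pow_sub_one_fin_two hdet]
  lia

theorem quotient_range_finite_card_and_not_iso_general {A : Matrix (Fin 2) (Fin 2) ℤ}
    (hdet : A.det = 1) (htrace : 2 < A.trace) :
    (∀ k : ℕ, 1 ≤ k →
      Finite ((Fin 2 → ℤ) ⧸ LinearMap.range (Matrix.toLin' (A ^ k - 1))) ∧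
      Nat.card ((Fin 2 → ℤ) ⧸ LinearMap.range (Matrix.toLin' (A ^ k - 1))) =
        (A ^ k - 1).det.natAbs) ∧
    (∀ k l : ℕ, k < l →
      ¬ Nonempty
        (((Fin 2 → ℤ) ⧸ LinearMap.range (Matrix.toLin' (A ^ k - 1))) ≃+
          ((Fin 2 → ℤ) ⧸ LinearMap.range (Matrix.toLin' (A ^ l - 1))))) := by
  have det_mono := strictMono_natAbs_det_pow_sub_one hdet htrace
  have card_eq (k : ℕ) : Nat.card ((Fin 2 → ℤ) ⧸ LinearMap.range (Matrix.toLin' (A ^ k - 1))) =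
      (A ^ k - 1).det.natAbs := by
    rw [card_quotient_range_eq_natAbs_det, LinearMap.det_toLin']
  refine ⟨fun k hk ↦ ⟨?_, card_eq k⟩, fun k l hkl ⟨e⟩ ↦ ?_⟩
  · rw [finite_quotient_range_iff_det_ne_zero, LinearMap.det_toLin', ← Int.natAbs_pos]
    exact (Nat.zero_le _).trans_lt (det_mono hk)
  · apply (det_mono hkl).ne
    simpa only [card_eq] using Nat.card_congr e.toEquiv

/-- For `A = !![8, 3; -3, -1]` over `ℤ` and any `k ≥ 1`, the quotient of `Fin 2 → ℤ` by the
range of the linear map given by `A ^ k - 1` is finite of cardinality `|det (A ^ k - 1)|`;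
consequently, for `0 < k < l` the corresponding quotients are not isomorphic as additive
groups. -/
theorem quotient_range_finite_card_and_not_iso :
    (∀ k : ℕ, 1 ≤ k →
      Finite ((Fin 2 → ℤ) ⧸
        LinearMap.range (Matrix.toLin'
          ((!![8, 3; -3, -1] : Matrix (Fin 2) (Fin 2) ℤ) ^ k - 1))) ∧
      Nat.card ((Fin 2 → ℤ) ⧸
        LinearMap.range (Matrix.toLin'
          ((!![8, 3; -3, -1] : Matrix (Fin 2) (Fin 2) ℤ) ^ k - 1))) =
        (((!![8, 3; -3, -1] : Matrix (Fin 2) (Fin 2) ℤ) ^ k - 1).det).natAbs) ∧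
    (∀ k l : ℕ, 0 < k → k < l →
      ¬ Nonempty
        (((Fin 2 → ℤ) ⧸
            LinearMap.range (Matrix.toLin'
              ((!![8, 3; -3, -1] : Matrix (Fin 2) (Fin 2) ℤ) ^ k - 1))) ≃+
          ((Fin 2 → ℤ) ⧸
            LinearMap.range (Matrix.toLin'
              ((!![8, 3; -3, -1] : Matrix (Fin 2) (Fin 2) ℤ) ^ l - 1))))) := by
  obtain ⟨finite_and_card, not_iso⟩ := quotient_range_finite_card_and_not_iso_general
    (A := !![8, 3; -3, -1]) (by decide) (by decide)
  exact ⟨finite_and_card, fun k l _ ↦ not_iso k l⟩
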